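/- arXiv:2312.01902 — 3 statements merged into one kernel-verified Lean document; each statement's English description precedes it below -/
import Mathlib

section
/- Let σ_i and σ_j be fixed-point-free involutions of a finite set V, and let x, y ∈ V with y ∉ {x, σ_i x}. Assume that x and y lie in distinct orbits of the subgroup generated by σ_i and σ_j. Let σ'_i be the involution obtained from σ_i by switching the pair of i-colored edges {x, σ_i x} and {y, σ_i y}. Then x and σ_i x lie in the same orbit of the subgroup generated by σ'_i and σ_j; that is, the two new i-colored edges {x, y} and {σ_i x, σ_i y} lie on the same {i,j}-colored cycle of the switched graph. (This is the fact used in the proof of Proposition 4.3 to show that, after switching a ρ_1-pair of color i involving only color 4, the residue of the switched graph obtained by deleting the 4-colored edges contains a ρ_3-pair formed by the two new i-colored edges.) -/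
/-!
The proof is a parity argument. Let `S` be the intersection of the old orbit of `x` (under
`σi, σj`) with the new one (under `σi', σj`). It is stable under `σj`, so its cardinality is even.
If `σi x` were not in the new orbit, then every `v ∈ S` other than `x` would avoid all four
endpoints of the switched edges, because `y` and `σi y` are outside the old orbit; hence
`σi' v = σi v ∈ S`, and `S \ {x}` would be stable under `σi`, so also of even cardinality.
-/


open MulAction

/-- A finite set stable under a fixed-point-free involution has even cardinality. -/
theorem even_card_of_stable {V : Type*} (f : V → V) (hf : ∀ v, f (f v) = v)
    (hff : ∀ v, f v ≠ v) (S : Finset V) (hS : ∀ v ∈ S, f v ∈ S) : Even S.card := by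
  have h : ∑ _v ∈ S, (1 : ZMod 2) = 0 :=
    Finset.sum_involution (fun v _ => f v) (fun _ _ => by decide) (fun v _ _ => hff v)
      (fun v hv => hS v hv) (fun v _ => hf v)
  rw [Finset.sum_const, nsmul_one] at h
  exact (ZMod.natCast_eq_zero_iff_even).1 h

theorem mem_orbit_apply {V : Type*} {s : Set (Equiv.Perm V)} {σ : Equiv.Perm V} (hσ : σ ∈ s)
    {v x : V} (hv : v ∈ orbit ↥(Subgroup.closure s) x) :
    σ v ∈ orbit ↥(Subgroup.closure s) x :=
  mem_orbit_of_mem_orbit (⟨σ, Subgroup.subset_closure hσ⟩ : ↥(Subgroup.closure s)) hv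

/-- let `σi, σj` be fixed-point-free involutions of the finite set `V`, and
`x, y ∈ V` with `y ∉ {x, σi x}` lying in distinct orbits of the subgroup generated by
`σi` and `σj`. If `σi'` is the fixed-point-free involution obtained from `σi` by switching
the pair of `i`-colored edges `{x, σi x}` and `{y, σi y}`, then `x` and `σi x` lie in the
same orbit of the subgroup generated by `σi'` and `σj`, i.e. the two new `i`-colored edges
`{x, y}` and `{σi x, σi y}` lie on the same `{i,j}`-colored cycle of the switched graph. -/
theorem stmt3 {V : Type*} [Fintype V]
    (σi σj : Equiv.Perm V)
    (hi : ∀ v, σi (σi v) = v) (hif : ∀ v, σi v ≠ v)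
    (hj : ∀ v, σj (σj v) = v) (hjf : ∀ v, σj v ≠ v)
    (x y : V) (hy : y ∉ ({x, σi x} : Set V))
    (hdist : y ∉ orbit ↥(Subgroup.closure ({σi, σj} : Set (Equiv.Perm V))) x)
    (σi' : Equiv.Perm V)
    (hi' : ∀ v, σi' (σi' v) = v) (hif' : ∀ v, σi' v ≠ v)
    (hx' : σi' x = y) (hsx' : σi' (σi x) = σi y)
    (hout : ∀ v, v ∉ ({x, σi x, y, σi y} : Set V) → σi' v = σi v) :
    σi x ∈ orbit ↥(Subgroup.closure ({σi', σj} : Set (Equiv.Perm V))) x := by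
  classical
  by_contra hcon
  set O := orbit ↥(Subgroup.closure ({σi, σj} : Set (Equiv.Perm V))) x
  set O' := orbit ↥(Subgroup.closure ({σi', σj} : Set (Equiv.Perm V))) x
  have hOi : ∀ v ∈ O, σi v ∈ O := fun v hv => mem_orbit_apply (by simp) hv
  have hOj : ∀ v ∈ O, σj v ∈ O := fun v hv => mem_orbit_apply (by simp) hv
  have hOi' : ∀ v ∈ O', σi' v ∈ O' := fun v hv => mem_orbit_apply (by simp) hv
  have hOj' : ∀ v ∈ O', σj v ∈ O' := fun v hv => mem_orbit_apply (by simp) hv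
  have hsy : σi y ∉ O := fun h => hdist (hi y ▸ hOi _ h)
  let S : Finset V := Finset.univ.filter fun v => v ∈ O ∧ v ∈ O'
  have hS : ∀ v, v ∈ S ↔ v ∈ O ∧ v ∈ O' := fun v => by simp [S]
  have hxS : x ∈ S := (hS x).2 ⟨mem_orbit_self x, mem_orbit_self x⟩
  have h1 : Even S.card := even_card_of_stable σj hj hjf S fun v hv =>
    (hS _).2 ⟨hOj v ((hS v).1 hv).1, hOj' v ((hS v).1 hv).2⟩
  have h2 : Even (S.erase x).card := by
    refine even_card_of_stable σi hi hif _ fun v hv => ?_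
    obtain ⟨hvx, hvS⟩ := Finset.mem_erase.1 hv
    obtain ⟨hvO, hvO'⟩ := (hS v).1 hvS
    have hvsx : v ≠ σi x := fun h => hcon (h ▸ hvO')
    have hvy : v ≠ y := fun h => hdist (h ▸ hvO)
    have hvsy : v ≠ σi y := fun h => hsy (h ▸ hvO)
    have hv' : σi' v = σi v := hout v (by simp [hvx, hvsx, hvy, hvsy])
    refine Finset.mem_erase.2 ⟨fun h => hvsx ?_, (hS _).2 ⟨hOi v hvO, hv' ▸ hOi' v hvO'⟩⟩
    rw [← h, hi]
  rw [← Finset.card_erase_add_one hxS] at h1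
  exact (Nat.even_add_one.1 h1) h2
end

section
/- Let σ_0, σ_1, σ_2, σ_3 be fixed-point-free involutions of a finite set V with |V| = 2p. Fix a color i ∈ {0,1,2,3} and vertices x, y ∈ V with y ∉ {x, σ_i x}, and assume that for every color j ∈ {0,1,2,3} ∖ {i} the vertices x and y lie in distinct orbits of the subgroup generated by σ_i and σ_j (the combinatorial condition that the two i-colored edges {x, σ_i x} and {y, σ_i y} form a ρ_1-pair whose only involved color is a fifth color 4). Let σ'_i be the involution obtained by switching this pair of i-colored edges, and for distinct colors r, s let g_{r,s} (resp. g'_{r,s}) denote the number of orbits of the subgroup generated by σ_r and σ_s (resp. with σ_i replaced by σ'_i). Then for every cyclic permutation ε = (ε_0, ε_1, ε_2, ε_3) of {0,1,2,3}: g'_{ε_0,ε_1} + g'_{ε_1,ε_2} + g'_{ε_2,ε_3} + g'_{ε_3,ε_0} = g_{ε_0,ε_1} + g_{ε_1,ε_2} + g_{ε_2,ε_3} + g_{ε_3,ε_0} − 2. Equivalently, the regular genus ρ_ε defined by the formula 2 − 2ρ_ε = g_{ε_0,ε_1} + g_{ε_1,ε_2} + g_{ε_2,ε_3} + g_{ε_3,ε_0}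 − 2p satisfies ρ'_ε = ρ_ε + 1. (This is the key computation in the proof of Proposition 4.3, showing that switching m ρ_1-pairs of color i involving color 4 yields ρ_{ε̂4}(Γ'_{4̂}) = ρ_{ε̂4}(Γ_{4̂}) + m, for the case m = 1.) -/
/-!
The sum over the cyclic permutation `ε` has two terms involving the color `i` and two that do not.
The latter are unaffected by the switching, so it suffices that the switching lowers `g_{i,j}` by
exactly one for every `j ≠ i` (`numCycles_switch`).

Write `a = σ i`, `b = σ j`. The orbit relation of `⟨τ, b⟩` is that of `⟨a, b⟩` with the two distinct
classes of `x` and `y` merged (`orbitRel_switch_iff`), and such a merging removes exactly one class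
(`card_quotient_merge`). The only point that is not formal is that `x` and `a x` remain connected
after the edge between them is deleted (`rel_switch_edge`), i.e. that a cycle minus an edge is
connected. This follows by parity: otherwise the vertices of the `⟨a, b⟩`-orbit of `x` which are
still connected to `x` form a set on which `b` is a fixed-point-free involution, while `a` is a
fixed-point-free involution on the same set with `x` removed.
-/

open MulAction

/-- The number `g_{r,s}` of `{r,s}`-colored cycles of the 4-colored graph encoded by the
family of involutions `σ`, i.e. the number of orbits on `V` of the subgroup generated by
`σ r` and `σ s`. -/
noncomputable def numCycles {V : Type*} (σ : Fin 4 → Equiv.Perm V) (r s : Fin 4) : ℕ :=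
  Nat.card (orbitRel.Quotient ↥(Subgroup.closure ({σ r, σ s} : Set (Equiv.Perm V))) V)

/-- The orbit relation on `V` of the subgroup generated by two permutations. -/
abbrev pairRel {V : Type*} (a b : Equiv.Perm V) : Setoid V :=
  orbitRel ↥(Subgroup.closure ({a, b} : Set (Equiv.Perm V))) V

lemma pairRel_left {V : Type*} (a b : Equiv.Perm V) (v : V) : pairRel a b (a v) v :=
  ⟨⟨a, Subgroup.subset_closure (by simp)⟩, rfl⟩

lemma pairRel_right {V : Type*} (a b : Equiv.Perm V) (v : V) : pairRel a b (b v) v :=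
  ⟨⟨b, Subgroup.subset_closure (by simp)⟩, rfl⟩

/-- The orbit relation is the least equivalence relation relating every `v` to `a v` and `b v`. -/
lemma pairRel_le {V : Type*} {a b : Equiv.Perm V} {s : Setoid V}
    (ha : ∀ v, s (a v) v) (hb : ∀ v, s (b v) v) {u v : V} (h : pairRel a b u v) : s u v := by
  obtain ⟨⟨g, hg⟩, rfl⟩ := h
  change s (g v) v
  induction hg using Subgroup.closure_induction generalizing v with
  | mem g hg =>
    rcases hg with rfl | rfl
    · exact ha v
    · exact hb v
  | one => exact s.refl v
  | mul g h _ _ hg hh => exact s.trans (hg (v := h v)) hh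
  | inv g _ hg => simpa using s.symm (hg (v := g⁻¹ v))

lemma even_card_of_involution {V : Type*} (s : Finset V) (f : V → V)
    (hmem : ∀ v ∈ s, f v ∈ s) (hinv : ∀ v, f (f v) = v) (hfpf : ∀ v, f v ≠ v) :
    Even s.card := by
  have h : ∑ v ∈ s, (1 : ZMod 2) = 0 :=
    Finset.sum_involution (fun v _ => f v) (fun _ _ => by decide)
      (fun v _ _ => hfpf v) (fun v hv => hmem v hv) (fun v _ => hinv v)
  rw [← ZMod.natCast_eq_zero_iff_even]
  simpa using h

/-- Deleting the edge `{x, a x}` does not disconnect its endpoints: if `τ` agrees with `a` on the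
`⟨a, b⟩`-orbit of `x` except at `x` and `a x`, then `x` and `a x` lie in one `⟨τ, b⟩`-orbit. -/
lemma rel_switch_edge {V : Type*} [Fintype V] {a b τ : Equiv.Perm V}
    (ha : ∀ v, a (a v) = v) (ha' : ∀ v, a v ≠ v)
    (hb : ∀ v, b (b v) = v) (hb' : ∀ v, b v ≠ v) (x : V)
    (hout : ∀ v, pairRel a b v x → v ≠ x → v ≠ a x → τ v = a v) :
    pairRel τ b (a x) x := by
  classical
  by_contra hne
  let s : Finset V := Finset.univ.filter fun v => pairRel a b v x ∧ pairRel τ b v x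
  have hs (v : V) : v ∈ s ↔ pairRel a b v x ∧ pairRel τ b v x := by simp [s]
  have hx : x ∈ s := (hs x).2 ⟨Setoid.refl' _ _, Setoid.refl' _ _⟩
  have h1 : Even s.card := by
    refine even_card_of_involution s b (fun v hv => ?_) hb hb'
    rw [hs] at hv ⊢
    exact ⟨Setoid.trans' _ (pairRel_right a b v) hv.1, Setoid.trans' _ (pairRel_right τ b v) hv.2⟩
  have h2 : Even (s.erase x).card := by
    refine even_card_of_involution (s.erase x) a (fun v hv => ?_) ha ha'
    rw [Finset.mem_erase, hs] at hv ⊢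
    obtain ⟨hvx, hv1, hv2⟩ := hv
    have hvax : v ≠ a x := by
      rintro rfl
      exact hne hv2
    refine ⟨fun h => hvax (by rw [← h, ha]), Setoid.trans' _ (pairRel_left a b v) hv1, ?_⟩
    rw [← hout v hv1 hvx hvax]
    exact Setoid.trans' _ (pairRel_left τ b v) hv2
  have h3 := Finset.card_erase_add_one hx
  rw [← h3] at h1
  exact (Nat.even_add_one.1 h1) h2

/-- Merging two distinct classes of an equivalence relation lowers the number of classes by one. -/
lemma card_quotient_merge {V : Type*} [Finite V] (r r' : Setoid V) (x y : V) (hxy : ¬ r x y)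
    (h : ∀ u v, r' u v ↔ r u v ∨ (r u x ∧ r v y) ∨ (r u y ∧ r v x)) :
    Nat.card (Quotient r') + 1 = Nat.card (Quotient r) := by
  classical
  let y' : Quotient r := Quotient.mk r y
  -- Discarding the class of `y` leaves one `r`-class inside each `r'`-class.
  let f : {q : Quotient r // q ≠ y'} → Quotient r' := fun q =>
    Quotient.map' (s₁ := r) (s₂ := r') id (fun u v huv => (h u v).2 (Or.inl huv)) q.1
  have hf : Function.Bijective f := by
    constructor
    · rintro ⟨q, hq⟩ ⟨q', hq'⟩ e
      induction q using Quotient.inductionOn with | _ u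
      induction q' using Quotient.inductionOn with | _ v
      have e' : r' u v := Quotient.exact e
      have hu : ¬ r u y := fun k => hq (Quotient.sound k)
      have hv : ¬ r v y := fun k => hq' (Quotient.sound k)
      apply Subtype.ext
      apply Quotient.sound
      rcases (h u v).1 e' with k | k | k
      · exact k
      · exact absurd k.2 hv
      · exact absurd k.1 hu
    · intro q
      induction q using Quotient.inductionOn with | _ v
      by_cases hv : r v y
      · exact ⟨⟨Quotient.mk r x, fun k => hxy (Quotient.exact k)⟩,
          Quotient.sound ((h x v).2 (Or.inr (Or.inl ⟨r.refl x, hv⟩)))⟩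
      · exact ⟨⟨Quotient.mk r v, fun k => hv (Quotient.exact k)⟩, rfl⟩
  rw [← Nat.card_eq_of_bijective f hf, ← Finite.card_option]
  exact Nat.card_congr (Equiv.optionSubtypeNe y')

/-- The orbit relation after the switching is the old one with the classes of `x` and `y`
merged. -/
lemma orbitRel_switch_iff {V : Type*} [Fintype V] {a b τ : Equiv.Perm V}
    (ha : ∀ v, a (a v) = v) (ha' : ∀ v, a v ≠ v)
    (hb : ∀ v, b (b v) = v) (hb' : ∀ v, b v ≠ v) (x y : V)
    (hxy : ¬ pairRel a b x y) (hτ : ∀ v, τ (τ v) = v)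
    (hτx : τ x = y) (hτax : τ (a x) = a y)
    (hout : ∀ v, v ∉ ({x, a x, y, a y} : Set V) → τ v = a v) (u v : V) :
    pairRel τ b u v ↔ pairRel a b u v ∨ (pairRel a b u x ∧ pairRel a b v y) ∨
      (pairRel a b u y ∧ pairRel a b v x) := by
  have hτy : τ y = x := by rw [← hτx, hτ]
  have hτay : τ (a y) = a x := by rw [← hτax, hτ]
  have hA := pairRel_left a b
  have hB := pairRel_right a b
  have hs {u v : V} (h : pairRel a b u v) : pairRel a b v u := Setoid.symm' _ h
  have ht {u v w : V} (h : pairRel a b u v) (h' : pairRel a b v w) : pairRel a b u w :=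
    Setoid.trans' _ h h'
  have hr (u : V) : pairRel a b u u := Setoid.refl' _ u
  have hs' {u v : V} (h : pairRel τ b u v) : pairRel τ b v u := Setoid.symm' _ h
  have ht' {u v w : V} (h : pairRel τ b u v) (h' : pairRel τ b v w) : pairRel τ b u w :=
    Setoid.trans' _ h h'
  constructor
  · let s : Setoid V :=
      { r := fun u v => pairRel a b u v ∨ (pairRel a b u x ∧ pairRel a b v y) ∨
          (pairRel a b u y ∧ pairRel a b v x)
        iseqv := by
          refine ⟨fun u => Or.inl (hr u), ?_, ?_⟩
          · rintro u v (h | h | h)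
            · exact Or.inl (hs h)
            · exact Or.inr (Or.inr h.symm)
            · exact Or.inr (Or.inl h.symm)
          · rintro u v w (h | ⟨h, k⟩ | ⟨h, k⟩) (h' | ⟨h', k'⟩ | ⟨h', k'⟩)
            · exact Or.inl (ht h h')
            · exact Or.inr (Or.inl ⟨ht h h', k'⟩)
            · exact Or.inr (Or.inr ⟨ht h h', k'⟩)
            · exact Or.inr (Or.inl ⟨h, ht (hs h') k⟩)
            · exact absurd (ht (hs h') k) hxy
            · exact Or.inl (ht h (hs k'))
            · exact Or.inr (Or.inr ⟨h, ht (hs h') k⟩)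
            · exact Or.inl (ht h (hs k'))
            · exact absurd (ht (hs k) h') hxy }
    refine pairRel_le (s := s) (fun v => ?_) (fun v => Or.inl (hB v))
    by_cases hv : v ∈ ({x, a x, y, a y} : Set V)
    · rcases hv with rfl | rfl | rfl | rfl
      · rw [hτx]; exact Or.inr (Or.inr ⟨hr _, hr _⟩)
      · rw [hτax]; exact Or.inr (Or.inr ⟨hA _, hA _⟩)
      · rw [hτy]; exact Or.inr (Or.inl ⟨hr _, hr _⟩)
      · rw [hτay]; exact Or.inr (Or.inl ⟨hA _, hA _⟩)
    · rw [hout v hv]; exact Or.inl (hA v)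
  · have ex : pairRel τ b (a x) x := by
      refine rel_switch_edge ha ha' hb hb' x fun v hv h1 h2 => hout v ?_
      rintro (h | h | rfl | rfl)
      · exact h1 h
      · exact h2 h
      · exact hxy (hs hv)
      · exact hxy (ht (hs hv) (hA y))
    have ey : pairRel τ b (a y) y := by
      refine rel_switch_edge ha ha' hb hb' y fun v hv h1 h2 => hout v ?_
      rintro (rfl | rfl | h | h)
      · exact hxy hv
      · exact hxy (ht (hs (hA x)) hv)
      · exact h1 h
      · exact h2 h
    have exy : pairRel τ b y x := by
      have := pairRel_left τ b x
      rwa [hτx] at this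
    have hle {u v : V} : pairRel a b u v → pairRel τ b u v := by
      refine pairRel_le (fun v => ?_) (pairRel_right τ b)
      by_cases hv : v ∈ ({x, a x, y, a y} : Set V)
      · rcases hv with rfl | rfl | rfl | rfl
        · exact ex
        · rw [ha]; exact hs' ex
        · exact ey
        · rw [ha]; exact hs' ey
      · rw [← hout v hv]; exact pairRel_left τ b v
    rintro (h | ⟨h, k⟩ | ⟨h, k⟩)
    · exact hle h
    · exact ht' (hle h) (ht' (hs' exy) (hs' (hle k)))
    · exact ht' (hle h) (ht' exy (hs' (hle k)))

lemma numCycles_comm {V : Type*} (σ : Fin 4 → Equiv.Perm V) (r s : Fin 4) :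
    numCycles σ r s = numCycles σ s r := by
  unfold numCycles
  rw [Set.pair_comm]

lemma numCycles_update_of_ne {V : Type*} (σ : Fin 4 → Equiv.Perm V) {i r s : Fin 4}
    (τ : Equiv.Perm V) (hr : r ≠ i) (hs : s ≠ i) :
    numCycles (Function.update σ i τ) r s = numCycles σ r s := by
  unfold numCycles
  rw [Function.update_of_ne hr, Function.update_of_ne hs]

/-- For each color `j ≠ i`, the switching merges the two `{i,j}`-colored cycles through `x`
and `y` into one and leaves the others unchanged. -/
lemma numCycles_switch {V : Type*} [Fintype V] (σ : Fin 4 → Equiv.Perm V)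
    (hinv : ∀ c v, σ c (σ c v) = v) (hfpf : ∀ c v, σ c v ≠ v) (i : Fin 4) (x y : V)
    (τ : Equiv.Perm V) (hτinv : ∀ v, τ (τ v) = v)
    (hτx : τ x = y) (hτsx : τ (σ i x) = σ i y)
    (hτout : ∀ v, v ∉ ({x, σ i x, y, σ i y} : Set V) → τ v = σ i v) (j : Fin 4) (hj : j ≠ i)
    (hdist : y ∉ orbit ↥(Subgroup.closure ({σ i, σ j} : Set (Equiv.Perm V))) x) :
    numCycles (Function.update σ i τ) i j + 1 = numCycles σ i j := by
  have hxy : ¬ pairRel (σ i) (σ j) x y := fun h => hdist (Setoid.symm' _ h)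
  unfold numCycles
  rw [Function.update_self, Function.update_of_ne hj]
  exact card_quotient_merge (pairRel (σ i) (σ j)) (pairRel τ (σ j)) x y hxy
    (orbitRel_switch_iff (hinv i) (hfpf i) (hinv j) (hfpf j) x y hxy hτinv hτx hτsx hτout)

/-- let `σ 0, σ 1, σ 2, σ 3` be fixed-point-free involutions of a finite set
`V` of cardinality `2p`, let `i` be a color and `x, y ∈ V` with `y ∉ {x, σ i x}` such that
for every color `j ≠ i` the vertices `x, y` lie in distinct orbits of the subgroup
generated by `σ i` and `σ j` (a `ρ₁`-pair involving only the fifth color `4`). If `τ` is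
the involution obtained from `σ i` by switching the pair of `i`-colored edges
`{x, σ i x}` and `{y, σ i y}`, then for every cyclic permutation `ε` of `{0,1,2,3}` the
sum of the numbers of `{ε_k, ε_{k+1}}`-colored cycles of the switched graph equals the
corresponding sum for the original graph minus 2 (equivalently, the regular genus
`ρ_ε` defined by `2 - 2ρ_ε = Σ g_{ε_k,ε_{k+1}} - 2p` increases by 1). -/
theorem stmt4 {V : Type*} [Fintype V] (p : ℕ) (hp : Fintype.card V = 2 * p)
    (σ : Fin 4 → Equiv.Perm V)
    (hinv : ∀ c v, σ c (σ c v) = v) (hfpf : ∀ c v, σ c v ≠ v)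
    (i : Fin 4) (x y : V) (hy : y ∉ ({x, σ i x} : Set V))
    (hdist : ∀ j, j ≠ i →
      y ∉ orbit ↥(Subgroup.closure ({σ i, σ j} : Set (Equiv.Perm V))) x)
    (τ : Equiv.Perm V)
    (hτinv : ∀ v, τ (τ v) = v) (hτfpf : ∀ v, τ v ≠ v)
    (hτx : τ x = y) (hτsx : τ (σ i x) = σ i y)
    (hτout : ∀ v, v ∉ ({x, σ i x, y, σ i y} : Set V) → τ v = σ i v) :
    ∀ ε : Equiv.Perm (Fin 4),
      numCycles (Function.update σ i τ) (ε 0) (ε 1) +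
      numCycles (Function.update σ i τ) (ε 1) (ε 2) +
      numCycles (Function.update σ i τ) (ε 2) (ε 3) +
      numCycles (Function.update σ i τ) (ε 3) (ε 0) + 2 =
      numCycles σ (ε 0) (ε 1) + numCycles σ (ε 1) (ε 2) +
      numCycles σ (ε 2) (ε 3) + numCycles σ (ε 3) (ε 0) := by
  intro ε
  obtain ⟨k, rfl⟩ := ε.surjective i
  have hε {m n : Fin 4} (h : m ≠ n) : ε m ≠ ε n := fun e => h (ε.injective e)
  have hsw (m : Fin 4) (hm : m ≠ k) :
      numCycles (Function.update σ (ε k) τ) (ε k) (ε m) + 1 = numCycles σ (ε k) (ε m) :=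
    numCycles_switch σ hinv hfpf (ε k) x y τ hτinv hτx hτsx hτout (ε m) (hε hm)
      (hdist _ (hε hm))
  have hsw' (m : Fin 4) (hm : m ≠ k) :
      numCycles (Function.update σ (ε k) τ) (ε m) (ε k) + 1 = numCycles σ (ε m) (ε k) := by
    rw [numCycles_comm _ (ε m), numCycles_comm _ (ε m)]
    exact hsw m hm
  have hne (m n : Fin 4) (hm : m ≠ k) (hn : n ≠ k) :
      numCycles (Function.update σ (ε k) τ) (ε m) (ε n) = numCycles σ (ε m) (ε n) :=
    numCycles_update_of_ne σ τ (hε hm) (hε hn)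
  clear hdist hτsx hτout hy
  have hk : k = 0 ∨ k = 1 ∨ k = 2 ∨ k = 3 := by
    clear * -; revert k; decide
  rcases hk with rfl | rfl | rfl | rfl
  · linarith [hsw 1 (by decide), hne 1 2 (by decide) (by decide),
      hne 2 3 (by decide) (by decide), hsw' 3 (by decide)]
  · linarith [hsw 2 (by decide), hne 2 3 (by decide) (by decide),
      hne 3 0 (by decide) (by decide), hsw' 0 (by decide)]
  · linarith [hsw 3 (by decide), hne 3 0 (by decide) (by decide),
      hne 0 1 (by decide) (by decide), hsw' 1 (by decide)]
  · linarith [hsw 0 (by decide), hne 0 1 (by decide) (by decide),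
      hne 1 2 (by decide) (by decide), hsw' 2 (by decide)]
end

section
/- Let σ_i and σ_4 be fixed-point-free involutions of a finite set V, and let b : V → Z/2Z satisfy b(σ_i v) ≠ b(v) and b(σ_4 v) ≠ b(v) for all v ∈ V (i.e., the 2-colored graph with edge-involutions σ_i and σ_4 is bipartite with bipartition classes b⁻¹(0), b⁻¹(1)). Let x, y ∈ V with y ∉ {x, σ_i x}, assume x and y lie in the same orbit of the subgroup generated by σ_i and σ_4 (the two i-colored edges {x, σ_i x} and {y, σ_i y} lie on the same {i,4}-colored cycle), and assume b(y) ≠ b(x) (so that the switching σ'_i preserves the bipartition, i.e., b(σ'_i v) ≠ b(v) for all v). Then the number of orbits of the subgroup generated by σ'_i and σ_4 is exactly one more than the number of orbits of the subgroup generated by σ_i and σ_4. (This is the combinatorial fact underlying the claim, in the proof of Proposition 4.3, that the bipartition-preserving switching of a ρ_1-pair of color i involving color 4 splits the common {i,4}-colored cycle, so that the 4̂-residue of the switched graph represents a sphere bundle over the circle, i.e., the boundary acquires one extra S²-bundle summand.) -/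
/-!
Write `z = σi y`. By the bipartition, `x` and `z` have the same color, and on the vertices of that
color `σ4 * σi'` is `σ4 * σi` precomposed with the transposition of `x` and `z`. Two vertices of the
same color lie in the same `⟨s, t⟩`-orbit only if they lie in the same cycle of `t * s`
(`sameCycle_of_mem_orbit`), so `x` and `z` lie on a common cycle of `σ4 * σi`. Precomposing with the
transposition cuts this cycle into two, one through `x` and one through `z`
(`not_sameCycle_of_swap`), hence `x` and `z` are in different orbits after the switching.

Conversely, the new orbits refine the old ones, an old orbit not containing `x` stays an orbit,
and every vertex of the old orbit of `x` is in the new orbit of `x` or of `z`. So, with the new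
orbit of `z` removed, the new orbits are in bijection with the old ones.
-/

open MulAction

/-- A property that holds at `v` and is preserved by the involutions `s` and `t` holds on the
`⟨s, t⟩`-orbit of `v`. -/
theorem orbit_induction {V : Type*} {s t : Equiv.Perm V}
    (hs : ∀ v, s (s v) = v) (ht : ∀ v, t (t v) = v) {P : V → Prop}
    (hPs : ∀ v, P v → P (s v)) (hPt : ∀ v, P v → P (t v)) {v w : V}
    (hw : w ∈ orbit ↥(Subgroup.closure ({s, t} : Set (Equiv.Perm V))) v) (hv : P v) : P w := by
  obtain ⟨⟨g, hg⟩, rfl⟩ := hw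
  have key : ∀ u, P (g u) ↔ P u := by
    induction hg using Subgroup.closure_induction with
    | mem g hg =>
      rcases hg with rfl | rfl
      · exact fun u => ⟨fun h => by simpa [hs] using hPs _ h, hPs u⟩
      · exact fun u => ⟨fun h => by simpa [ht] using hPt _ h, hPt u⟩
    | one => simp
    | mul a c _ _ ha hc => intro u; rw [Equiv.Perm.mul_apply, ha, hc]
    | inv a _ ha => intro u; rw [← ha]; simp
  exact (key v).2 hv

theorem left_mem_orbit {V : Type*} (s t : Equiv.Perm V) {v w : V}
    (h : v ∈ orbit ↥(Subgroup.closure ({s, t} : Set (Equiv.Perm V))) w) :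
    s v ∈ orbit ↥(Subgroup.closure ({s, t} : Set (Equiv.Perm V))) w :=
  mem_orbit_of_mem_orbit
    (⟨s, Subgroup.subset_closure (by simp)⟩ : Subgroup.closure ({s, t} : Set (Equiv.Perm V))) h

theorem right_mem_orbit {V : Type*} (s t : Equiv.Perm V) {v w : V}
    (h : v ∈ orbit ↥(Subgroup.closure ({s, t} : Set (Equiv.Perm V))) w) :
    t v ∈ orbit ↥(Subgroup.closure ({s, t} : Set (Equiv.Perm V))) w :=
  mem_orbit_of_mem_orbit
    (⟨t, Subgroup.subset_closure (by simp)⟩ : Subgroup.closure ({s, t} : Set (Equiv.Perm V))) h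

/-- On a bipartite 2-colored graph, walking along edges alternately of type `s` and `t` from `v`
visits all vertices of the component of `v` that have the color of `v`. -/
theorem sameCycle_of_mem_orbit {V : Type*} {s t : Equiv.Perm V}
    (hs : ∀ v, s (s v) = v) (ht : ∀ v, t (t v) = v) (b : V → ZMod 2)
    (hbs : ∀ v, b (s v) ≠ b v) (hbt : ∀ v, b (t v) ≠ b v) {v w : V}
    (hw : w ∈ orbit ↥(Subgroup.closure ({s, t} : Set (Equiv.Perm V))) v) (hb : b w = b v) :
    (t * s).SameCycle v w := by
  have two : ∀ p q r : ZMod 2, p ≠ q → q ≠ r → p = r := by decide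
  -- Vertices of the color opposite to `v` are represented by their `t`-neighbors.
  refine (orbit_induction hs ht (P := fun w => (b w = b v → (t * s).SameCycle v w) ∧
    (b w ≠ b v → (t * s).SameCycle v (t w))) ?_ ?_ hw ⟨fun _ => .refl _ _, fun h => (h rfl).elim⟩).1
    hb
  · rintro u ⟨h1, h2⟩
    refine ⟨fun h => ?_, fun h => ?_⟩
    · have := h2 (fun h' => hbs u (h.trans h'.symm))
      rw [← Equiv.Perm.sameCycle_apply_right]
      simpa [hs] using this
    · have := h1 (two _ _ _ (hbs u).symm h)
      rw [← Equiv.Perm.sameCycle_apply_right] at this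
      simpa using this
  · rintro u ⟨h1, h2⟩
    refine ⟨fun h => h2 fun h' => hbt u (h.trans h'.symm), fun h => ?_⟩
    rw [ht]
    exact h1 (two _ _ _ (hbt u).symm h)

/-- Exchanging the images of two points `x ≠ z` on one cycle of `f` separates them. Only the values
of the new permutation on the `f`-cycle of `x` matter. -/
theorem not_sameCycle_of_swap {V : Type*} [Finite V] {f f' : Equiv.Perm V} {x z : V}
    (hxz : x ≠ z) (h : f.SameCycle x z) (hx : f' x = f z)
    (hf : ∀ v, f.SameCycle x v → v ≠ x → v ≠ z → f' v = f v) :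
    ¬ f'.SameCycle x z := by
  intro h'
  set m := Function.minimalPeriod f x with hm
  have hmpos : 0 < m := Function.minimalPeriod_pos_of_mem_periodicPts
    (f.injective.mem_periodicPts x)
  have hfm : f^[m] x = x := Function.iterate_minimalPeriod
  obtain ⟨k, hkm, hk⟩ : ∃ k < m, f^[k] x = z := by
    obtain ⟨k, hk⟩ := h.exists_nat_pow_eq
    refine ⟨k % m, Nat.mod_lt _ hmpos, ?_⟩
    rw [Function.iterate_mod_minimalPeriod_eq, ← hk, Equiv.Perm.iterate_eq_pow]
  have inj : ∀ i j, i < m → j < m → f^[i] x = f^[j] x → i = j := fun i j hi hj e =>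
    (Function.iterate_eq_iterate_iff_of_lt_minimalPeriod hi hj).1 e
  -- The `f'`-cycle of `x` is the arc of the `f`-cycle running from `f z` to `x`.
  have arc : ∀ n : ℕ, ∃ j, k < j ∧ j ≤ m ∧ (f' ^ n) x = f^[j] x := by
    intro n
    induction n with
    | zero => exact ⟨m, hkm, le_rfl, by simp [hfm]⟩
    | succ n ih =>
      obtain ⟨j, hkj, hjm, hj⟩ := ih
      rw [pow_succ', Equiv.Perm.mul_apply, hj]
      rcases hjm.lt_or_eq with hlt | rfl
      · refine ⟨j + 1, by omega, hlt, ?_⟩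
        rw [Function.iterate_succ_apply']
        refine hf _ ⟨j, by simp [Equiv.Perm.iterate_eq_pow]⟩ (fun e => ?_) (fun e => ?_)
        · have := inj j 0 hlt hmpos e
          omega
        · have := inj j k hlt hkm (e.trans hk.symm)
          omega
      · exact ⟨k + 1, by omega, hkm, by rw [hfm, hx, Function.iterate_succ_apply', hk]⟩
  obtain ⟨n, hn⟩ := h'.exists_nat_pow_eq
  obtain ⟨j, hkj, hjm, hj⟩ := arc n
  rw [hn, ← hk] at hj
  rcases hjm.lt_or_eq with hlt | rfl
  · have := inj k j hkm hlt hj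
    omega
  · exact hxz (hfm.symm.trans (hj.symm.trans hk))

/-- If a setoid `r'` refines `r`, and the only identification `r` makes beyond `r'` is that of the
distinct `r'`-classes of `x` and `z`, then `r'` has one class more than `r`. -/
theorem card_quotient_eq_add_one {V : Type*} [Finite V] (r r' : Setoid V) {x z : V}
    (hle : ∀ v w, r' v w → r v w) (hxz : r x z) (hxz' : ¬ r' x z)
    (hout : ∀ v w, r v w → ¬ r v x → r' v w)
    (hin : ∀ v, r v x → r' v x ∨ r' v z) :
    Nat.card (Quotient r') = Nat.card (Quotient r) + 1 := by
  classical
  have e : Nat.card {p : Quotient r' // p ≠ Quotient.mk r' z} = Nat.card (Quotient r) := by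
    refine Nat.card_eq_of_bijective
      (fun p => Quotient.map' (s₁ := r') (s₂ := r) id hle p.1) ⟨?_, ?_⟩
    · rintro ⟨p, hp⟩ ⟨q, hq⟩ hpq
      induction p using Quotient.inductionOn with | _ v
      induction q using Quotient.inductionOn with | _ w
      have hvw : r v w := Quotient.exact hpq
      have hp' : ¬ r' v z := fun h => hp (Quotient.sound h)
      have hq' : ¬ r' w z := fun h => hq (Quotient.sound h)
      refine Subtype.ext (Quotient.sound ?_)
      by_cases hv : r v x
      · exact r'.trans ((hin v hv).resolve_right hp')
          (r'.symm ((hin w (r.trans (r.symm hvw) hv)).resolve_right hq'))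
      · exact hout v w hvw hv
    · intro q
      induction q using Quotient.inductionOn with | _ v
      by_cases hv : r' v z
      · exact ⟨⟨Quotient.mk r' x, fun h => hxz' (Quotient.exact h)⟩,
          Quotient.sound (r.trans hxz (r.symm (hle v z hv)))⟩
      · exact ⟨⟨Quotient.mk r' v, fun h => hv (Quotient.exact h)⟩, rfl⟩
  rw [← e, ← Finite.card_option]
  exact Nat.card_congr (Equiv.optionSubtypeNe (Quotient.mk r' z)).symm



/-- let `σi, σ4` be fixed-point-free involutions of the finite set `V` and
`b : V → ℤ/2ℤ` a bipartition for both of them. Let `x, y ∈ V` with `y ∉ {x, σi x}` lie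
in the same orbit of the subgroup generated by `σi` and `σ4` (the two `i`-colored edges
lie on the same `{i,4}`-colored cycle) and with `b y ≠ b x` (so the switching preserves
the bipartition). If `σi'` is the fixed-point-free involution obtained from `σi` by
switching the pair of `i`-colored edges `{x, σi x}` and `{y, σi y}`, then the number of
orbits of the subgroup generated by `σi'` and `σ4` is exactly one more than the number
of orbits of the subgroup generated by `σi` and `σ4`. -/
theorem stmt5 {V : Type*} [Fintype V]
    (σi σ4 : Equiv.Perm V)
    (hi : ∀ v, σi (σi v) = v) (hif : ∀ v, σi v ≠ v)
    (h4 : ∀ v, σ4 (σ4 v) = v) (h4f : ∀ v, σ4 v ≠ v)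
    (b : V → ZMod 2)
    (hbi : ∀ v, b (σi v) ≠ b v) (hb4 : ∀ v, b (σ4 v) ≠ b v)
    (x y : V) (hy : y ∉ ({x, σi x} : Set V))
    (hsame : y ∈ orbit ↥(Subgroup.closure ({σi, σ4} : Set (Equiv.Perm V))) x)
    (hbxy : b y ≠ b x)
    (σi' : Equiv.Perm V)
    (hi' : ∀ v, σi' (σi' v) = v) (hif' : ∀ v, σi' v ≠ v)
    (hx' : σi' x = y) (hsx' : σi' (σi x) = σi y)
    (hout : ∀ v, v ∉ ({x, σi x, y, σi y} : Set V) → σi' v = σi v) :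
    Nat.card (orbitRel.Quotient ↥(Subgroup.closure ({σi', σ4} : Set (Equiv.Perm V))) V) =
      Nat.card (orbitRel.Quotient ↥(Subgroup.closure ({σi, σ4} : Set (Equiv.Perm V))) V) + 1 := by
  have two : ∀ p q r : ZMod 2, p ≠ q → q ≠ r → p = r := by decide
  have hyx : y ≠ x := fun h => hy (by simp [h])
  have hysx : y ≠ σi x := fun h => hy (by simp [h])
  have hxz : x ≠ σi y := fun h => hysx (by rw [h, hi])
  have hbz : b (σi y) = b x := two _ _ _ (hbi y) hbxy
  have hy' : σi' y = x := by rw [← hx', hi']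
  have hsy' : σi' (σi y) = σi x := by rw [← hsx', hi']
  have hbi' : ∀ v, b (σi' v) ≠ b v := by
    intro v
    by_cases hv : v ∈ ({x, σi x, y, σi y} : Set V)
    · rcases hv with rfl | rfl | rfl | rfl
      · rwa [hx']
      · rw [hsx', hbz]
        exact (hbi x).symm
      · rw [hy']
        exact hbxy.symm
      · rw [hsy', hbz]
        exact hbi x
    · rw [hout v hv]
      exact hbi v
  have hxz_old : σi y ∈ orbit ↥(Subgroup.closure ({σi, σ4} : Set (Equiv.Perm V))) x :=
    left_mem_orbit _ _ hsame
  have hcolor : ∀ v, (σ4 * σi).SameCycle x v → b v = b x := by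
    intro v hv
    obtain ⟨n, rfl⟩ := hv.exists_nat_pow_eq
    induction n with
    | zero => rfl
    | succ n ih =>
      rw [pow_succ', Equiv.Perm.mul_apply, Equiv.Perm.mul_apply,
        two _ _ _ (hb4 _) (hbi _), ih ⟨n, by simp⟩]
  have hsep : ¬ (σ4 * σi').SameCycle x (σi y) := by
    refine not_sameCycle_of_swap (f := σ4 * σi) hxz
      (sameCycle_of_mem_orbit hi h4 b hbi hb4 hxz_old hbz) (by simp [hx', hi]) ?_
    intro v hv hvx hvz
    have hbv := hcolor v hv
    rw [Equiv.Perm.mul_apply, Equiv.Perm.mul_apply, hout v]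
    rintro (h | h | h | h)
    · exact hvx h
    · exact hbi x (h ▸ hbv)
    · exact hbxy (h ▸ hbv)
    · exact hvz h
  have hz'x : σi x ∈ orbit ↥(Subgroup.closure ({σi', σ4} : Set (Equiv.Perm V))) (σi y) :=
    hsy' ▸ left_mem_orbit σi' σ4 (mem_orbit_self (σi y))
  have hyx' : y ∈ orbit ↥(Subgroup.closure ({σi', σ4} : Set (Equiv.Perm V))) x :=
    hx' ▸ left_mem_orbit σi' σ4 (mem_orbit_self x)
  refine card_quotient_eq_add_one _ _ (x := x) (z := σi y) ?_ ?_ ?_ ?_ ?_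
  · intro v w hvw
    change v ∈ orbit _ w
    refine orbit_induction hi' h4
      (P := (· ∈ orbit ↥(Subgroup.closure ({σi, σ4} : Set (Equiv.Perm V))) w))
      ?_ (fun u => right_mem_orbit σi σ4) hvw (mem_orbit_self w)
    intro u hu
    have hsu := left_mem_orbit σi σ4 hu
    by_cases hv : u ∈ ({x, σi x, y, σi y} : Set V)
    · have hxw : x ∈ orbit ↥(Subgroup.closure ({σi, σ4} : Set (Equiv.Perm V))) w := by
        rcases hv with rfl | rfl | rfl | rfl
        · exact hu
        · rwa [hi] at hsu
        · exact orbit_eq_iff.2 hu ▸ mem_orbit_symm.1 hsame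
        · exact orbit_eq_iff.2 hu ▸ mem_orbit_symm.1 hxz_old
      rw [← orbit_eq_iff.2 hxw]
      rcases hv with rfl | rfl | rfl | rfl
      · rwa [hx']
      · rwa [hsx']
      · rw [hy']
        exact mem_orbit_self _
      · rw [hsy']
        exact left_mem_orbit _ _ (mem_orbit_self _)
    · rwa [hout u hv]
  · exact mem_orbit_symm.1 hxz_old
  · intro h
    exact hsep (sameCycle_of_mem_orbit hi' h4 b hbi' hb4 (mem_orbit_symm.1 h) hbz)
  · intro v w hvw hvx
    apply mem_orbit_symm.1
    refine (orbit_induction hi h4 (P := fun u =>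
      u ∈ orbit ↥(Subgroup.closure ({σi, σ4} : Set (Equiv.Perm V))) v ∧
      u ∈ orbit ↥(Subgroup.closure ({σi', σ4} : Set (Equiv.Perm V))) v) ?_
      (fun u hu => ⟨right_mem_orbit _ _ hu.1, right_mem_orbit _ _ hu.2⟩)
      (mem_orbit_symm.1 hvw) ⟨mem_orbit_self v, mem_orbit_self v⟩).2
    rintro u ⟨hu, hu'⟩
    refine ⟨left_mem_orbit _ _ hu, ?_⟩
    have hux : u ∉ orbit ↥(Subgroup.closure ({σi, σ4} : Set (Equiv.Perm V))) x := fun h =>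
      hvx (show v ∈ orbit _ x from orbit_eq_iff.2 h ▸ mem_orbit_symm.1 hu)
    rw [← hout u]
    · exact left_mem_orbit _ _ hu'
    · rintro (rfl | rfl | rfl | rfl)
      · exact hux (mem_orbit_self _)
      · exact hux (left_mem_orbit _ _ (mem_orbit_self _))
      · exact hux hsame
      · exact hux hxz_old
  · intro v hv
    refine orbit_induction hi h4 (P := fun u =>
      u ∈ orbit ↥(Subgroup.closure ({σi', σ4} : Set (Equiv.Perm V))) x ∨
      u ∈ orbit ↥(Subgroup.closure ({σi', σ4} : Set (Equiv.Perm V))) (σi y)) ?_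
      (fun u hu => hu.imp (right_mem_orbit _ _) (right_mem_orbit _ _)) hv
      (Or.inl (mem_orbit_self x))
    intro u hu
    by_cases hv : u ∈ ({x, σi x, y, σi y} : Set V)
    · rcases hv with rfl | rfl | rfl | rfl
      · exact Or.inr hz'x
      · rw [hi]
        exact Or.inl (mem_orbit_self _)
      · exact Or.inr (mem_orbit_self _)
      · rw [hi]
        exact Or.inl hyx'
    · rw [← hout u hv]
      exact hu.imp (left_mem_orbit _ _) (left_mem_orbit _ _)
end
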